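/- Let D be a face-convex good drawing of K_n with outer face F and let u, v, x, y be distinct vertices of K_n. If x and y are on different sides of uv, then the subdrawing D[{u,v,x,y}] with the edge-arc D[xy] removed has no crossing; that is, the five edge-arcs on {u,v,x,y} other than D[xy] are pairwise non-crossing. -/

import Mathlib

open Set Topology

noncomputable section

abbrev Plane : Type := EuclideanSpace ℝ (Fin 2)

abbrev SpherePt : Type := ↥(Metric.sphere (0 : EuclideanSpace ℝ (Fin 3)) 1)

/-- `γ` crosses the curve `σ` at `p`: `p` lies on both sets, and in every neighbourhood of `p`
there is a smaller neighbourhood `V` such that `V \ σ` splits into two connected "sides",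
both of which meet `γ`. -/
def CrossesAt {X : Type*} [TopologicalSpace X] (σ γ : Set X) (p : X) : Prop :=
  p ∈ σ ∧ p ∈ γ ∧ ∀ U ∈ nhds p, ∃ V ∈ nhds p, V ⊆ U ∧
    ∃ C₁ C₂ : Set X, V \ σ = C₁ ∪ C₂ ∧ Disjoint C₁ C₂ ∧
      IsPreconnected C₁ ∧ IsPreconnected C₂ ∧ (γ ∩ C₁).Nonempty ∧ (γ ∩ C₂).Nonempty

/-- `Δ` is one of the closed regions ("closed discs") bounded by the curve `C`:
it is the union of `C` with a connected component of the complement of `C`. -/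
def IsClosedSide {X : Type*} [TopologicalSpace X] (C Δ : Set X) : Prop :=
  ∃ q, q ∉ C ∧ Δ = connectedComponentIn Cᶜ q ∪ C

/-- `Δ` is one of the open regions ("open discs") bounded by the curve `C`. -/
def IsOpenSide {X : Type*} [TopologicalSpace X] (C Δ : Set X) : Prop :=
  ∃ q, q ∉ C ∧ Δ = connectedComponentIn Cᶜ q

/-- `G` is a face (a connected component of the complement) of the point set `A`. -/
def IsFaceOf {X : Type*} [TopologicalSpace X] (A G : Set X) : Prop :=
  ∃ q, q ∉ A ∧ G = connectedComponentIn Aᶜ q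

/-- A good drawing of the complete graph `K_n` in the space `X`. -/
structure GoodDrawing (n : ℕ) (X : Type*) [TopologicalSpace X] where
  vtx : Fin n → X
  arc : Fin n → Fin n → Set X
  vtx_inj : Function.Injective vtx
  arc_symm : ∀ u v, arc u v = arc v u
  isArc : ∀ u v, u ≠ v → ∃ f : ℝ → X, ContinuousOn f (Set.Icc 0 1) ∧
    Set.InjOn f (Set.Icc 0 1) ∧ f 0 = vtx u ∧ f 1 = vtx v ∧ arc u v = f '' Set.Icc 0 1
  vtx_not_mem : ∀ u v w, u ≠ v → w ≠ u → w ≠ v → vtx w ∉ arc u v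
  adj_arcs : ∀ u v w, u ≠ v → u ≠ w → v ≠ w → arc u v ∩ arc u w = {vtx u}
  indep_arcs : ∀ u v x y : Fin n, u ≠ v → x ≠ y → u ≠ x → u ≠ y → v ≠ x → v ≠ y →
    (arc u v ∩ arc x y).Subsingleton ∧
      ∀ p ∈ arc u v ∩ arc x y,
        CrossesAt (arc u v) (arc x y) p ∧ CrossesAt (arc x y) (arc u v) p
  no_triple_pt : ∀ p : X, p ∉ Set.range vtx → ∀ u v x y s t : Fin n,
    u ≠ v → x ≠ y → s ≠ t →
    ({u, v} : Finset (Fin n)) ≠ {x, y} → ({u, v} : Finset (Fin n)) ≠ {s, t} →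
    ({x, y} : Finset (Fin n)) ≠ {s, t} →
    ¬(p ∈ arc u v ∧ p ∈ arc x y ∧ p ∈ arc s t)

namespace GoodDrawing

variable {n : ℕ} {X : Type*} [TopologicalSpace X]

/-- The point set of the subdrawing induced by the set `W` of vertices. -/
def image (D : GoodDrawing n X) (W : Set (Fin n)) : Set X :=
  (D.vtx '' W) ∪ ⋃ u ∈ W, ⋃ v ∈ W, ⋃ (_ : u ≠ v), D.arc u v

/-- The simple closed curve that is the drawing of the 3-cycle on `a`, `b`, `c`. -/
def tri (D : GoodDrawing n X) (a b c : Fin n) : Set X :=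
  D.arc a b ∪ D.arc b c ∪ D.arc a c

/-- `Δ` is convex: it contains the arc between any two vertex points it contains. -/
def ConvexDisc (D : GoodDrawing n X) (Δ : Set X) : Prop :=
  ∀ x y : Fin n, x ≠ y → D.vtx x ∈ Δ → D.vtx y ∈ Δ → D.arc x y ⊆ Δ

/-- `F` is a face of the drawing `D`. -/
def IsFace (D : GoodDrawing n X) (F : Set X) : Prop :=
  IsFaceOf (D.image Set.univ) F

/-- `D` is face-convex with outer face `F`. -/
def FaceConvex (D : GoodDrawing n X) (F : Set X) : Prop :=
  D.IsFace F ∧ ∀ a b c : Fin n, a ≠ b → a ≠ c → b ≠ c →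
    ∀ Δ : Set X, IsClosedSide (D.tri a b c) Δ → ¬F ⊆ Δ → D.ConvexDisc Δ

/-- `D` is a convex drawing: every 3-cycle has at least one convex closed side. -/
def IsConvex (D : GoodDrawing n X) : Prop :=
  ∀ a b c : Fin n, a ≠ b → a ≠ c → b ≠ c →
    ∃ Δ : Set X, IsClosedSide (D.tri a b c) Δ ∧ D.ConvexDisc Δ

/-- The closed curve drawn by the cycle `c 0, c 1, …, c (m-1), c 0` of `K_n`. -/
def cycCurve (D : GoodDrawing n X) {m : ℕ} [NeZero m] (c : Fin m → Fin n) : Set X :=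
  ⋃ i : Fin m, D.arc (c i) (c (i + 1))

/-- `Δ` is the convex hull `Δ_W` of the vertex set `W` (relative to the outer face `F`):
the face of the subdrawing `D[W]` containing `F` is bounded by a cycle `C_W` on vertices
of `W`, and `Δ` is the closed disc bounded by `D[C_W]` disjoint from `F`. -/
def IsHull (D : GoodDrawing n X) (F : Set X) (W : Set (Fin n)) (Δ : Set X) : Prop :=
  ∃ (m : ℕ) (c : Fin (m + 3) → Fin n), Function.Injective c ∧ (∀ i, c i ∈ W) ∧
    (∃ G : Set X, IsFaceOf (D.image W) G ∧ F ⊆ G ∧ frontier G = D.cycCurve c) ∧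
    IsClosedSide (D.cycCurve c) Δ ∧ Disjoint F Δ

/-- The data of the two local sides `C 0`, `C 1` of the arc `D[uv]` at an interior
point `p` of the arc. -/
def LocalSides (D : GoodDrawing n X) (u v : Fin n) (p : X) (C : Fin 2 → Set X) : Prop :=
  p ∈ D.arc u v ∧ p ≠ D.vtx u ∧ p ≠ D.vtx v ∧
    ∃ V ∈ nhds p, C 0 ∪ C 1 = V \ D.arc u v ∧ Disjoint (C 0) (C 1) ∧
      IsPreconnected (C 0) ∧ IsPreconnected (C 1) ∧ (C 0).Nonempty ∧ (C 1).Nonempty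

/-- Relative to the outer face `F` and the local sides `C` of `D[uv]` at `p`, the
vertex `w` is on side `i` of `uv`: the closed disc bounded by `D[{u,v,w}]` not
containing `F` lies locally on side `i` of `D[uv]`. -/
def OnSide (D : GoodDrawing n X) (F : Set X) (u v : Fin n) (p : X) (C : Fin 2 → Set X)
    (i : Fin 2) (w : Fin n) : Prop :=
  w ≠ u ∧ w ≠ v ∧ ∃ Δ : Set X, IsClosedSide (D.tri u v w) Δ ∧ ¬F ⊆ Δ ∧
    ∃ V ∈ nhds p, C i ∩ V ⊆ Δ

/-- `Side(uv, i)`: the set consisting of `u`, `v` and all vertices on side `i` of `uv`. -/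
def SideSet (D : GoodDrawing n X) (F : Set X) (u v : Fin n) (p : X) (C : Fin 2 → Set X)
    (i : Fin 2) : Set (Fin n) :=
  {u, v} ∪ {w : Fin n | D.OnSide F u v p C i w}

/-- The edge-arcs `D[uv]` and `D[xy]` cross: they share a non-vertex point. -/
def Crosses (D : GoodDrawing n X) (u v x y : Fin n) : Prop :=
  ∃ p : X, p ∈ D.arc u v ∩ D.arc x y ∧ p ∉ Set.range D.vtx

/-- The set of empty triangles of `D`: pairs of a 3-set of vertices together with an
open disc bounded by the corresponding triangle containing no vertex point. -/
def emptyTriangles (D : GoodDrawing n X) : Set (Finset (Fin n) × Set X) :=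
  {T | ∃ a b c : Fin n, a ≠ b ∧ a ≠ c ∧ b ≠ c ∧ T.1 = {a, b, c} ∧
    IsOpenSide (D.tri a b c) T.2 ∧ ∀ i, D.vtx i ∉ T.2}

end GoodDrawing

/-- A pseudoline in the plane. -/
def IsPseudoline (σ : Set Plane) : Prop :=
  IsClosed σ ∧ Nonempty (↥σ ≃ₜ ℝ) ∧ ¬IsPreconnected σᶜ

/-- An arrangement of pseudolines: any two distinct members meet in exactly one
point, at which they cross. -/
def IsArrangement (A : Finset (Set Plane)) : Prop :=
  (∀ σ ∈ A, IsPseudoline σ) ∧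
    ∀ σ ∈ A, ∀ τ ∈ A, σ ≠ τ →
      ∃ p : Plane, σ ∩ τ = {p} ∧ CrossesAt σ τ p ∧ CrossesAt τ σ p

/-- A planar good drawing of `K_n` is pseudolinear if some arrangement of pseudolines
contains, for each edge, a distinct pseudoline containing that edge-arc. -/
def GoodDrawing.Pseudolinear {n : ℕ} (D : GoodDrawing n Plane) : Prop :=
  ∃ (A : Finset (Set Plane)) (L : Fin n → Fin n → Set Plane), IsArrangement A ∧
    (∀ u v, u ≠ v → L u v ∈ A ∧ D.arc u v ⊆ L u v) ∧
    (∀ u v, L u v = L v u) ∧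
    ∀ u v x y : Fin n, u ≠ v → x ≠ y →
      ({u, v} : Finset (Fin n)) ≠ {x, y} → L u v ≠ L x y

/-!
Suppose that `D[ux]` and `D[vy]` cross at `q`, and let `S` be the closed curve formed by `D[uv]` and
the subarcs from `u` to `q` and from `v` to `q`. The outer region of a closed curve is the component
of its complement that contains the outer face. Face-convexity keeps the subarc of `D[vy]` from `v`
to `q` out of the outer region of the triangle `uvx`. By Janiszewski's theorem, near an interior
point `p` of `D[uv]` the outer region of `S` therefore lies in the outer region of `uvx`, and by
symmetry in that of `uvy`. If `x` and `y` are on different sides of `uv`, then near `p` every point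
off `D[uv]` lies in one of the two inner discs. So `p` is not in the closure of the outer region of
`S`, although it lies on the simple closed curve `S`.

Janiszewski's theorem, that two points separated by neither of two closed sets with connected
intersection are not separated by their union, is proved with Eilenberg's criterion: a compact
`K` does not separate `a` from `b` if and only if, after stereographic projection from `b`, the
function `z ↦ z - a` has a continuous logarithm on `K`.
-/

/-! ### Continuous logarithms -/

lemma exists_eq_add_const_of_exp_eqOn {X : Type*} [TopologicalSpace X] {K : Set X}
    (h : IsPreconnected K) {g₁ g₂ : X → ℂ} (hg₁ : ContinuousOn g₁ K) (hg₂ : ContinuousOn g₂ K)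
    (heq : EqOn (Complex.exp ∘ g₁) (Complex.exp ∘ g₂) K) :
    ∃ c : ℂ, Complex.exp c = 1 ∧ ∀ z ∈ K, g₁ z = g₂ z + c := by
  rcases K.eq_empty_or_nonempty with rfl | ⟨z₀, hz₀⟩
  · exact ⟨0, Complex.exp_zero, fun _ hz => hz.elim⟩
  have hone : ∀ z ∈ K, Complex.exp (g₁ z - g₂ z) = 1 := fun z hz => by
    rw [Complex.exp_sub, show Complex.exp (g₁ z) = Complex.exp (g₂ z) from heq hz,
      div_self (Complex.exp_ne_zero _)]
  refine ⟨g₁ z₀ - g₂ z₀, hone z₀ hz₀, fun z hz => ?_⟩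
  have hconst : g₁ z - g₂ z = g₁ z₀ - g₂ z₀ :=
    Complex.isCoveringMap_exp.constOn_of_comp h (hg₁.sub hg₂)
      (fun a ha b hb => Subtype.ext ((hone a ha).trans (hone b hb).symm)) hz hz₀
  rw [← hconst, add_sub_cancel]

/-- `φ` admits a continuous logarithm on `K`. -/
def HasLogOn {X : Type*} [TopologicalSpace X] (φ : X → ℂ) (K : Set X) : Prop :=
  ∃ g : X → ℂ, ContinuousOn g K ∧ EqOn (Complex.exp ∘ g) φ K

namespace HasLogOn

variable {X Y : Type*} [TopologicalSpace X] [TopologicalSpace Y] {φ ψ : X → ℂ} {K L : Set X}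

lemma ne_zero (h : HasLogOn φ K) {z : X} (hz : z ∈ K) : φ z ≠ 0 := by
  obtain ⟨g, -, hgφ⟩ := h
  exact hgφ hz ▸ Complex.exp_ne_zero (g z)

lemma continuousOn (h : HasLogOn φ K) : ContinuousOn φ K := by
  obtain ⟨g, hg, hgφ⟩ := h
  exact (Complex.continuous_exp.comp_continuousOn hg).congr hgφ.symm

lemma congr (h : HasLogOn φ K) (hφψ : EqOn φ ψ K) : HasLogOn ψ K := by
  obtain ⟨g, hg, hgφ⟩ := h
  exact ⟨g, hg, hgφ.trans hφψ⟩

lemma comp {S : Set Y} {f : Y → X} (h : HasLogOn φ K) (hf : ContinuousOn f S)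
    (hSK : MapsTo f S K) : HasLogOn (φ ∘ f) S := by
  obtain ⟨g, hg, hgφ⟩ := h
  exact ⟨g ∘ f, hg.comp hf hSK, fun _ hz => hgφ (hSK hz)⟩

lemma mono (h : HasLogOn φ K) (hLK : L ⊆ K) : HasLogOn φ L :=
  h.comp continuousOn_id hLK

lemma image_of_comp {f : Y → X} (hf : IsEmbedding f) {S : Set Y} (h : HasLogOn (φ ∘ f) S) :
    HasLogOn φ (f '' S) := by
  obtain ⟨g, hg, hgφ⟩ := h
  have hext (y : Y) : Function.extend f g 0 (f y) = g y := hf.injective.extend_apply g 0 y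
  refine ⟨Function.extend f g 0, ?_, ?_⟩
  · exact hf.isInducing.continuousOn_image_iff.2 (hg.congr fun y _ => hext y)
  · rintro _ ⟨y, hy, rfl⟩
    rw [Function.comp_apply, hext]
    exact hgφ hy

/-- Here `ψ / φ` takes values in the disc of radius `1` about `1`, where the principal branch of
the logarithm is continuous. -/
lemma of_norm_sub_lt (h : HasLogOn φ K) (hψ : ContinuousOn ψ K)
    (hlt : ∀ z ∈ K, ‖ψ z - φ z‖ < ‖φ z‖) : HasLogOn ψ K := by
  have hslit : ∀ z ∈ K, 1 + (ψ z - φ z) / φ z ∈ Complex.slitPlane := fun z hz => by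
    apply Complex.mem_slitPlane_of_norm_lt_one
    rw [norm_div, div_lt_one (norm_pos_iff.2 (h.ne_zero hz))]
    exact hlt z hz
  have hquot : ContinuousOn (fun z => 1 + (ψ z - φ z) / φ z) K :=
    continuousOn_const.add ((hψ.sub h.continuousOn).div h.continuousOn fun _ hz => h.ne_zero hz)
  have hne : ∀ z ∈ K, φ z ≠ 0 := fun _ hz => h.ne_zero hz
  obtain ⟨g, hg, hgφ⟩ := h
  refine ⟨fun z => g z + Complex.log (1 + (ψ z - φ z) / φ z), hg.add (hquot.clog hslit), ?_⟩
  intro z hz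
  have hexp : Complex.exp (g z) = φ z := hgφ hz
  rw [Function.comp_apply, Complex.exp_add, hexp,
    Complex.exp_log (Complex.slitPlane_ne_zero (hslit z hz))]
  field_simp [hne z hz]
  ring

lemma exists_continuousMap_extension [NormalSpace X] (h : HasLogOn φ K) (hK : IsClosed K) :
    ∃ G : C(X, ℂ), EqOn (Complex.exp ∘ G) φ K := by
  obtain ⟨g, hg, hgφ⟩ := h
  obtain ⟨G, hG⟩ := ContinuousMap.exists_restrict_eq hK
    (⟨K.domRestrict g, hg.domRestrict⟩ : C(K, ℂ))
  refine ⟨G, fun z hz => ?_⟩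
  have hGg : G z = g z := congrArg (fun k : C(K, ℂ) => k ⟨z, hz⟩) hG
  rw [Function.comp_apply, hGg]
  exact hgφ hz

open scoped Classical in
lemma union (hK : IsClosed K) (hL : IsClosed L) (hKL : IsPreconnected (K ∩ L))
    (hφK : HasLogOn φ K) (hφL : HasLogOn φ L) : HasLogOn φ (K ∪ L) := by
  obtain ⟨g₁, hg₁, he₁⟩ := hφK
  obtain ⟨g₂, hg₂, he₂⟩ := hφL
  obtain ⟨c, hc, hcg⟩ := exists_eq_add_const_of_exp_eqOn hKL (hg₁.mono inter_subset_left)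
    (hg₂.mono inter_subset_right) fun z hz => (he₁ hz.1).trans (he₂ hz.2).symm
  have heK : EqOn (K.piecewise g₁ fun z => g₂ z + c) g₁ K := K.piecewise_eqOn _ _
  have heL : EqOn (K.piecewise g₁ fun z => g₂ z + c) (fun z => g₂ z + c) L := fun z hz => by
    by_cases hzK : z ∈ K
    · rw [piecewise_eq_of_mem _ _ _ hzK, hcg z ⟨hzK, hz⟩]
    · rw [piecewise_eq_of_notMem _ _ _ hzK]
  refine ⟨K.piecewise g₁ fun z => g₂ z + c, ?_, ?_⟩
  · exact (hg₁.congr heK).union_of_isClosed ((hg₂.add continuousOn_const).congr heL) hK hL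
  · rintro z (hz | hz)
    · rw [Function.comp_apply, heK hz]
      exact he₁ hz
    · rw [Function.comp_apply, heL hz, Complex.exp_add, hc, mul_one]
      exact he₂ hz

end HasLogOn

section Logarithms

variable {X : Type*} [TopologicalSpace X] {φ e : X → ℂ} {K : Set X}

lemma hasLogOn_const {c : ℂ} (hc : c ≠ 0) : HasLogOn (fun _ => c) K :=
  ⟨fun _ => Complex.log c, continuousOn_const, fun _ _ => Complex.exp_log hc⟩

lemma hasLogOn_univ [SimplyConnectedSpace X] [LocallyPathConnectedSpace X] (hφ : Continuous φ)
    (h0 : ∀ z, φ z ≠ 0) : HasLogOn φ univ := by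
  obtain ⟨x₀⟩ : Nonempty X := inferInstance
  obtain ⟨g, ⟨-, hg⟩, -⟩ := Complex.isCoveringMapOn_exp.existsUnique_continuousMap_lifts
    ⟨φ, hφ⟩ (Complex.exp_log (h0 x₀)) h0
  exact ⟨g, g.continuous.continuousOn, fun z _ => congrFun hg z⟩

lemma hasLogOn_image_Icc [T2Space X] {f : ℝ → X} {s t : ℝ} (hst : s ≤ t)
    (hf : ContinuousOn f (Icc s t)) (hinj : InjOn f (Icc s t))
    (hφ : ContinuousOn φ (f '' Icc s t)) (h0 : ∀ z ∈ f '' Icc s t, φ z ≠ 0) :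
    HasLogOn φ (f '' Icc s t) := by
  have hemb : IsEmbedding ((Icc s t).domRestrict f) :=
    (hf.domRestrict.isClosedEmbedding hinj.injective).isEmbedding
  have hmem (r : Icc s t) : f r ∈ f '' Icc s t := mem_image_of_mem f r.2
  have hlog : HasLogOn (IccExtend hst (φ ∘ (Icc s t).domRestrict f)) univ :=
    hasLogOn_univ (hφ.comp_continuous hf.domRestrict hmem).Icc_extend' fun _ => h0 _ (hmem _)
  rw [← range_domRestrict, ← image_univ]
  refine HasLogOn.image_of_comp hemb ((hlog.comp continuous_subtype_val.continuousOn
    (mapsTo_univ _ _)).congr fun r _ => ?_)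
  exact IccExtend_val hst _ r

lemma eventually_cobounded_hasLogOn_sub (hK : IsCompact K) (he : ContinuousOn e K) :
    ∀ᶠ w in Bornology.cobounded ℂ, HasLogOn (fun z => e z - w) K := by
  obtain ⟨M, hM, hKM⟩ := (hK.image_of_continuousOn he).isBounded.exists_pos_norm_le
  filter_upwards [tendsto_norm_cobounded_atTop.eventually_gt_atTop M] with w hw
  have hw0 : -w ≠ 0 := neg_ne_zero.2 (norm_pos_iff.1 (hM.trans hw))
  refine (hasLogOn_const hw0).of_norm_sub_lt (he.sub continuousOn_const) fun z hz => ?_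
  rw [sub_neg_eq_add, sub_add_cancel, norm_neg]
  exact (hKM _ (mem_image_of_mem e hz)).trans_lt hw

lemma eventually_hasLogOn_sub_iff (hK : IsCompact K) (he : ContinuousOn e K) {w : ℂ}
    (hw : w ∉ e '' K) :
    ∀ᶠ w' in 𝓝 w, (HasLogOn (fun z => e z - w) K ↔ HasLogOn (fun z => e z - w') K) := by
  obtain ⟨δ, hδ, hball⟩ := Metric.mem_nhds_iff.1
    ((hK.image_of_continuousOn he).isClosed.isOpen_compl.mem_nhds hw)
  have hδK : ∀ z ∈ K, δ ≤ ‖e z - w‖ := fun z hz => by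
    by_contra! hlt
    exact hball (mem_ball_iff_norm.2 hlt) (mem_image_of_mem e hz)
  filter_upwards [Metric.ball_mem_nhds w (half_pos hδ)] with w' hw'
  rw [mem_ball_iff_norm] at hw'
  constructor
  · refine fun h => h.of_norm_sub_lt (he.sub continuousOn_const) fun z hz => ?_
    rw [sub_sub_sub_cancel_left, norm_sub_rev]
    linarith [hδK z hz]
  · refine fun h => h.of_norm_sub_lt (he.sub continuousOn_const) fun z hz => ?_
    rw [sub_sub_sub_cancel_left]
    have htri := norm_sub_le_norm_sub_add_norm_sub (e z) w' w
    linarith [hδK z hz]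

end Logarithms

lemma not_hasLogOn_sub_sphere (w : ℂ) {R : ℝ} (hR : 0 < R) :
    ¬HasLogOn (fun z => z - w) (Metric.sphere w R) := by
  rintro ⟨g, hg, hgexp⟩
  have hcircle (θ : ℝ) : circleMap w R θ ∈ Metric.sphere w R := circleMap_mem_sphere w hR.le θ
  have hexp (θ : ℝ) : Complex.exp (g (circleMap w R θ)) =
      Complex.exp (Real.log R + θ * Complex.I) := by
    rw [Complex.exp_add, ← Complex.ofReal_exp, Real.exp_log hR, ← circleMap_zero,
      ← circleMap_sub_center w]
    exact hgexp (hcircle θ)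
  obtain ⟨c, -, hc⟩ := exists_eq_add_const_of_exp_eqOn isPreconnected_univ
    (hg.comp_continuous (continuous_circleMap w R) hcircle).continuousOn
    (g₂ := fun θ : ℝ => Real.log R + θ * Complex.I) (by fun_prop) fun θ _ => hexp θ
  have hperiod : circleMap w R (2 * Real.pi) = circleMap w R 0 := by
    simpa using periodic_circleMap w R 0
  have hzero : ((2 * Real.pi : ℝ) : ℂ) * Complex.I = 0 := by
    have h₀ : g (circleMap w R 0) = Real.log R + (0 : ℝ) * Complex.I + c := hc 0 (mem_univ _)
    have h₁ : g (circleMap w R (2 * Real.pi)) =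
        Real.log R + (2 * Real.pi : ℝ) * Complex.I + c := hc (2 * Real.pi) (mem_univ _)
    rw [hperiod, h₀] at h₁
    linear_combination -h₁ + Complex.I * Complex.ofReal_zero
  simp [Real.pi_ne_zero] at hzero

open scoped Classical in
lemma not_hasLogOn_sub_frontier {P : Set ℂ} (hP : Bornology.IsBounded P) {w : ℂ} (hw : w ∈ P) :
    ¬HasLogOn (fun z => z - w) (frontier P) := by
  intro h
  obtain ⟨G, hG⟩ := h.exists_continuousMap_extension isClosed_frontier
  set H : ℂ → ℂ := fun z => if z ∈ P then Complex.exp (G z) else z - w with hH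
  have hHcont : Continuous H :=
    Continuous.if hG (Complex.continuous_exp.comp G.continuous) (by fun_prop)
  have hHne : ∀ z, H z ≠ 0 := fun z => by
    by_cases hz : z ∈ P
    · simp only [hH, if_pos hz, ne_eq, Complex.exp_ne_zero, not_false_eq_true]
    · simp only [hH, if_neg hz]
      exact sub_ne_zero.2 (ne_of_mem_of_not_mem hw hz).symm
  obtain ⟨R, hR, hPR⟩ := hP.subset_ball_lt 0 w
  refine not_hasLogOn_sub_sphere w hR (((hasLogOn_univ hHcont hHne).mono (subset_univ _)).congr ?_)
  intro z hz
  have hzP : z ∉ P := fun hzP => (Metric.mem_ball.1 (hPR hzP)).ne (Metric.mem_sphere.1 hz)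
  simp only [hH, if_neg hzP]

/-! ### Janiszewski's theorem on the sphere -/

section Components

variable {X : Type*} [TopologicalSpace X]

lemma isPreconnected_of_forall_mem_connectedComponentIn {s : Set X}
    (h : ∀ a ∈ s, ∀ b ∈ s, b ∈ connectedComponentIn s a) : IsPreconnected s :=
  isPreconnected_of_forall_pair fun a ha b hb =>
    ⟨connectedComponentIn s a, connectedComponentIn_subset s a, mem_connectedComponentIn ha,
      h a ha b hb, isPreconnected_connectedComponentIn⟩

variable [LocallyConnectedSpace X] {K : Set X}

lemma closure_connectedComponentIn_compl_subset (hK : IsClosed K) (a : X) :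
    closure (connectedComponentIn Kᶜ a) ⊆ connectedComponentIn Kᶜ a ∪ K := by
  intro z hz
  by_cases hzK : z ∈ K
  · exact Or.inr hzK
  obtain ⟨w, hwz, hwa⟩ := mem_closure_iff.1 hz _
    (hK.isOpen_compl.connectedComponentIn (x := z)) (mem_connectedComponentIn hzK)
  rw [connectedComponentIn_eq hwa, ← connectedComponentIn_eq hwz]
  exact Or.inl (mem_connectedComponentIn hzK)

lemma frontier_connectedComponentIn_compl_subset (hK : IsClosed K) (a : X) :
    frontier (connectedComponentIn Kᶜ a) ⊆ K := by
  rw [hK.isOpen_compl.connectedComponentIn.frontier_eq, sdiff_subset_iff]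
  exact closure_connectedComponentIn_compl_subset hK a

end Components

section Sphere

instance : Fact (Module.finrank ℝ (EuclideanSpace ℝ (Fin 3)) = 2 + 1) := ⟨by simp⟩

instance : LocallyConnectedSpace SpherePt :=
  ChartedSpace.locallyConnectedSpace (EuclideanSpace ℝ (Fin 2)) SpherePt

/-- Stereographic projection from `b`, with values in the complex plane. -/
def stereo (b : SpherePt) : OpenPartialHomeomorph SpherePt ℂ :=
  (stereographic' 2 b).trans
    Complex.orthonormalBasisOneI.repr.symm.toHomeomorph.toOpenPartialHomeomorph

variable {a b : SpherePt} {K K₁ K₂ : Set SpherePt}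

lemma stereo_source (b : SpherePt) : (stereo b).source = {b}ᶜ := by
  simp [stereo]

lemma stereo_target (b : SpherePt) : (stereo b).target = univ := by
  simp [stereo]

lemma stereo_symm_stereo (hab : a ≠ b) : (stereo b).symm (stereo b a) = a :=
  (stereo b).left_inv ((stereo_source b).symm ▸ hab)

lemma stereo_stereo_symm (b : SpherePt) (z : ℂ) : stereo b ((stereo b).symm z) = z :=
  (stereo b).right_inv ((stereo_target b).symm ▸ mem_univ z)

lemma stereo_symm_ne (b : SpherePt) (z : ℂ) : (stereo b).symm z ≠ b := by
  have h := (stereo b).map_target ((stereo_target b).symm ▸ mem_univ z)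
  rwa [stereo_source] at h

lemma continuous_stereo_symm (b : SpherePt) : Continuous (stereo b).symm := by
  have h := (stereo b).continuousOn_symm
  rwa [stereo_target, continuousOn_univ] at h

lemma continuousOn_stereo (hb : b ∉ K) : ContinuousOn (stereo b) K :=
  (stereo b).continuousOn.mono ((stereo_source b).symm ▸ subset_compl_singleton_iff.2 hb)

lemma continuousAt_stereo (hab : a ≠ b) : ContinuousAt (stereo b) a :=
  (stereo b).continuousAt ((stereo_source b).symm ▸ hab)

lemma tendsto_stereo_cobounded (b : SpherePt) :
    Filter.Tendsto (stereo b) (𝓝[≠] b) (Bornology.cobounded ℂ) := by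
  rw [Metric.cobounded_eq_cocompact, Filter.hasBasis_cocompact.tendsto_right_iff]
  intro S hS
  have hnhds : ((stereo b).symm '' S)ᶜ ∈ 𝓝 b := by
    refine (hS.image (continuous_stereo_symm b)).isClosed.isOpen_compl.mem_nhds ?_
    rintro ⟨z, -, hz⟩
    exact stereo_symm_ne b z hz
  filter_upwards [nhdsWithin_le_nhds hnhds, self_mem_nhdsWithin] with w hw hwb hwS
  exact hw ⟨stereo b w, hwS, stereo_symm_stereo hwb⟩

/-- The property `w = b ∨ HasLogOn (stereo b · - stereo b w) K` is locally constant in `w ∉ K`,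
also at `b` because `stereo b` is unbounded there. -/
lemma hasLogOn_stereo_of_mem_connectedComponentIn (hK : IsClosed K) (hab : a ≠ b)
    (h : b ∈ connectedComponentIn Kᶜ a) :
    HasLogOn (fun z => stereo b z - stereo b a) K := by
  set Q : SpherePt → Prop := fun w => w = b ∨ HasLogOn (fun z => stereo b z - stereo b w) K
  have hbK : b ∉ K := connectedComponentIn_subset _ _ h
  have haK : a ∉ K := connectedComponentIn_nonempty_iff.1 ⟨b, h⟩
  have hcont := continuousOn_stereo hbK
  have hlocal : ∀ w ∈ connectedComponentIn Kᶜ a,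
      ∀ᶠ w' in 𝓝[connectedComponentIn Kᶜ a] w, (Q w ↔ Q w') := by
    refine fun w hw => Filter.Eventually.filter_mono nhdsWithin_le_nhds ?_
    rcases eq_or_ne w b with rfl | hwb
    · have hlog := (tendsto_stereo_cobounded w).eventually
        (eventually_cobounded_hasLogOn_sub hK.isCompact hcont)
      filter_upwards [eventually_nhdsWithin_iff.1 hlog] with w' hw'
      exact iff_of_true (Or.inl rfl) (or_iff_not_imp_left.2 hw')
    · have hwK : stereo b w ∉ stereo b '' K := by
        rintro ⟨z, hz, hzw⟩
        have hzb := ne_of_mem_of_not_mem hz hbK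
        rw [← stereo_symm_stereo hwb, ← hzw, stereo_symm_stereo hzb] at hw
        exact connectedComponentIn_subset _ _ hw hz
      filter_upwards [(continuousAt_stereo hwb).eventually
        (eventually_hasLogOn_sub_iff hK.isCompact hcont hwK), isOpen_ne.mem_nhds hwb] with w' h₁ h₂
      simp only [Q, hwb, show w' ≠ b from h₂, false_or, h₁]
  have hQ : Q a ↔ Q b := isPreconnected_connectedComponentIn.induction₂ (fun w w' => (Q w ↔ Q w'))
    hlocal (fun _ _ _ _ _ _ => Iff.trans) (fun _ _ _ _ => Iff.symm) (mem_connectedComponentIn haK) h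
  exact (hQ.2 (Or.inl rfl)).resolve_left hab

lemma mem_connectedComponentIn_of_hasLogOn_stereo (hK : IsClosed K) (hab : a ≠ b)
    (ha : a ∉ K) (hb : b ∉ K) (h : HasLogOn (fun z => stereo b z - stereo b a) K) :
    b ∈ connectedComponentIn Kᶜ a := by
  by_contra hba
  set U := connectedComponentIn Kᶜ a
  have hbU : b ∉ closure U := fun hbU =>
    (closure_connectedComponentIn_compl_subset hK a hbU).elim hba hb
  have hbdd : Bornology.IsBounded ((stereo b).symm ⁻¹' U) := by
    refine (isClosed_closure.isCompact.image_of_continuousOn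
      (continuousOn_stereo hbU)).isBounded.subset fun z hz => ?_
    exact ⟨(stereo b).symm z, subset_closure hz, stereo_stereo_symm b z⟩
  have hmem : stereo b a ∈ (stereo b).symm ⁻¹' U := by
    rw [mem_preimage, stereo_symm_stereo hab]
    exact mem_connectedComponentIn ha
  have hfrontier : MapsTo (stereo b).symm (frontier ((stereo b).symm ⁻¹' U)) K :=
    ((continuous_stereo_symm b).frontier_preimage_subset U).trans
      (preimage_mono (frontier_connectedComponentIn_compl_subset hK a))
  refine not_hasLogOn_sub_frontier hbdd hmem
    ((h.comp (continuous_stereo_symm b).continuousOn hfrontier).congr fun z _ => ?_)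
  simp only [Function.comp_apply, stereo_stereo_symm]

lemma mem_connectedComponentIn_union_of_isPreconnected_inter (h₁ : IsClosed K₁)
    (h₂ : IsClosed K₂) (h : IsPreconnected (K₁ ∩ K₂)) (hb₁ : b ∈ connectedComponentIn K₁ᶜ a)
    (hb₂ : b ∈ connectedComponentIn K₂ᶜ a) : b ∈ connectedComponentIn (K₁ ∪ K₂)ᶜ a := by
  have ha : a ∉ K₁ ∪ K₂ := not_or.2 ⟨connectedComponentIn_nonempty_iff.1 ⟨b, hb₁⟩,
    connectedComponentIn_nonempty_iff.1 ⟨b, hb₂⟩⟩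
  have hb : b ∉ K₁ ∪ K₂ := not_or.2
    ⟨connectedComponentIn_subset _ _ hb₁, connectedComponentIn_subset _ _ hb₂⟩
  rcases eq_or_ne a b with rfl | hab
  · exact mem_connectedComponentIn ha
  · exact mem_connectedComponentIn_of_hasLogOn_stereo (h₁.union h₂) hab ha hb
      ((hasLogOn_stereo_of_mem_connectedComponentIn h₁ hab hb₁).union h₁ h₂ h
        (hasLogOn_stereo_of_mem_connectedComponentIn h₂ hab hb₂))

lemma isPreconnected_compl_union (h₁ : IsClosed K₁) (h₂ : IsClosed K₂)
    (h : IsPreconnected (K₁ ∩ K₂)) (hc₁ : IsPreconnected K₁ᶜ) (hc₂ : IsPreconnected K₂ᶜ) :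
    IsPreconnected (K₁ ∪ K₂)ᶜ := by
  refine isPreconnected_of_forall_mem_connectedComponentIn fun a ha b hb => ?_
  rw [compl_union] at ha hb
  refine mem_connectedComponentIn_union_of_isPreconnected_inter h₁ h₂ h ?_ ?_
  · exact hc₁.subset_connectedComponentIn ha.1 Subset.rfl hb.1
  · exact hc₂.subset_connectedComponentIn ha.2 Subset.rfl hb.2

end Sphere

/-! ### Simple arcs -/

section SimpleArcs

/-- `A` is a simple arc from `a` to `b`, that is, an injective continuous image of a compact
interval. The interval may be a single point, in which case `a = b` and `A = {a}`. -/
def IsSimpleArc {X : Type*} [TopologicalSpace X] (A : Set X) (a b : X) : Prop :=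
  ∃ (f : ℝ → X) (s t : ℝ), s ≤ t ∧ ContinuousOn f (Icc s t) ∧ InjOn f (Icc s t) ∧
    f s = a ∧ f t = b ∧ f '' Icc s t = A

/-- The point `q` splits the simple arc `A` from `a` to `b` into the subarcs `A₁` from `a` to `q`
and `A₂` from `q` to `b`. -/
structure IsArcSplit {X : Type*} [TopologicalSpace X] (A A₁ A₂ : Set X) (a q b : X) : Prop where
  left : IsSimpleArc A₁ a q
  right : IsSimpleArc A₂ q b
  union_eq : A₁ ∪ A₂ = A
  inter_eq : A₁ ∩ A₂ = {q}

variable {X : Type*} [TopologicalSpace X] {A A₁ A₂ : Set X} {a b p q : X}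

lemma isSimpleArc_image_Icc {f : ℝ → X} {s t s' t' : ℝ} (hf : ContinuousOn f (Icc s t))
    (hinj : InjOn f (Icc s t)) (hs : s ≤ s') (hst : s' ≤ t') (ht : t' ≤ t) :
    IsSimpleArc (f '' Icc s' t') (f s') (f t') :=
  ⟨f, s', t', hst, hf.mono (Icc_subset_Icc hs ht), hinj.mono (Icc_subset_Icc hs ht), rfl, rfl, rfl⟩

namespace IsSimpleArc

lemma left_mem (h : IsSimpleArc A a b) : a ∈ A := by
  obtain ⟨f, s, t, hst, -, -, rfl, -, rfl⟩ := h
  exact mem_image_of_mem f (left_mem_Icc.2 hst)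

lemma right_mem (h : IsSimpleArc A a b) : b ∈ A := by
  obtain ⟨f, s, t, hst, -, -, -, rfl, rfl⟩ := h
  exact mem_image_of_mem f (right_mem_Icc.2 hst)

lemma isClosed [T2Space X] (h : IsSimpleArc A a b) : IsClosed A := by
  obtain ⟨f, s, t, -, hf, -, -, -, rfl⟩ := h
  exact (isCompact_Icc.image_of_continuousOn hf).isClosed

lemma isPreconnected (h : IsSimpleArc A a b) : IsPreconnected A := by
  obtain ⟨f, s, t, -, hf, -, -, -, rfl⟩ := h
  exact isPreconnected_Icc.image f hf

lemma isPreconnected_sdiff_left (h : IsSimpleArc A a b) : IsPreconnected (A \ {a}) := by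
  obtain ⟨f, s, t, hst, hf, hinj, rfl, -, rfl⟩ := h
  have hs : s ∈ Icc s t := left_mem_Icc.2 hst
  rw [← image_singleton, ← hinj.image_sdiff_subset (singleton_subset_iff.2 hs), Icc_sdiff_left]
  exact isPreconnected_Ioc.image f (hf.mono Ioc_subset_Icc_self)

lemma isPreconnected_sdiff_pair (h : IsSimpleArc A a b) : IsPreconnected (A \ {a, b}) := by
  obtain ⟨f, s, t, hst, hf, hinj, rfl, rfl, rfl⟩ := h
  have hends : {s, t} ⊆ Icc s t := pair_subset (left_mem_Icc.2 hst) (right_mem_Icc.2 hst)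
  rw [← image_pair, ← hinj.image_sdiff_subset hends, Icc_sdiff_both]
  exact isPreconnected_Ioo.image f (hf.mono Ioo_subset_Icc_self)

lemma exists_isArcSplit (h : IsSimpleArc A a b) (hq : q ∈ A) :
    ∃ A₁ A₂, IsArcSplit A A₁ A₂ a q b := by
  obtain ⟨f, s, t, -, hf, hinj, rfl, rfl, rfl⟩ := h
  obtain ⟨r, hr, rfl⟩ := hq
  refine ⟨f '' Icc s r, f '' Icc r t, isSimpleArc_image_Icc hf hinj le_rfl hr.1 hr.2,
    isSimpleArc_image_Icc hf hinj hr.1 hr.2 le_rfl, ?_, ?_⟩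
  · rw [← image_union, Icc_union_Icc_eq_Icc hr.1 hr.2]
  · rw [← hinj.image_inter (Icc_subset_Icc_right hr.2) (Icc_subset_Icc_left hr.1),
      Icc_inter_Icc_eq_singleton hr.1 hr.2, image_singleton]

lemma exists_subarcs_avoiding (h : IsSimpleArc A a b) (hp : p ∈ A) (hpa : p ≠ a) (hpb : p ≠ b)
    {N : Set X} (hN : N ∈ 𝓝 p) :
    ∃ c d A₁ A₂, IsSimpleArc A₁ a c ∧ IsSimpleArc A₂ d b ∧ Disjoint A₁ A₂ ∧ A₁ ∪ A₂ ⊆ A ∧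
      p ∉ A₁ ∪ A₂ ∧ A \ (A₁ ∪ A₂) ⊆ N := by
  obtain ⟨f, s, t, -, hf, hinj, rfl, rfl, rfl⟩ := h
  obtain ⟨r, hr, rfl⟩ := hp
  have hsr : s < r := hr.1.lt_of_ne fun h => hpa (h ▸ rfl)
  have hrt : r < t := hr.2.lt_of_ne fun h => hpb (h ▸ rfl)
  obtain ⟨ε, hε, hball⟩ := (nhds_basis_Icc_pos r).mem_iff.1 (Filter.inter_mem
    ((hf.continuousAt (Icc_mem_nhds hsr hrt)).preimage_mem_nhds hN) (Ioo_mem_nhds hsr hrt))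
  have hc : r - ε ∈ Ioo s t := (hball (left_mem_Icc.2 (by linarith))).2
  have hd : r + ε ∈ Ioo s t := (hball (right_mem_Icc.2 (by linarith))).2
  have hI₁ : Icc s (r - ε) ⊆ Icc s t := Icc_subset_Icc_right hc.2.le
  have hI₂ : Icc (r + ε) t ⊆ Icc s t := Icc_subset_Icc_left hd.1.le
  refine ⟨f (r - ε), f (r + ε), f '' Icc s (r - ε), f '' Icc (r + ε) t,
    isSimpleArc_image_Icc hf hinj le_rfl hc.1.le hc.2.le,
    isSimpleArc_image_Icc hf hinj hd.1.le hd.2.le le_rfl, ?_, ?_, ?_, ?_⟩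
  · rw [disjoint_iff_inter_eq_empty, ← hinj.image_inter hI₁ hI₂, Icc_inter_Icc, image_eq_empty]
    exact Icc_eq_empty fun h => (le_sup_right.trans (h.trans inf_le_left)).not_gt (by linarith)
  · exact union_subset (image_mono hI₁) (image_mono hI₂)
  · rw [← image_union, hinj.mem_image_iff (union_subset hI₁ hI₂) hr]
    rintro (h | h) <;> linarith [h.1, h.2]
  · rintro _ ⟨⟨z, hz, rfl⟩, hzA⟩
    rw [← image_union, hinj.mem_image_iff (union_subset hI₁ hI₂) hz] at hzA
    exact (hball ⟨(not_le.1 fun h => hzA (Or.inl ⟨hz.1, h⟩)).le,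
      (not_le.1 fun h => hzA (Or.inr ⟨h, hz.2⟩)).le⟩).1

end IsSimpleArc

end SimpleArcs

section Separation

namespace IsSimpleArc

variable {A P : Set SpherePt} {a b p c : SpherePt}

lemma isPreconnected_compl (h : IsSimpleArc A a b) : IsPreconnected Aᶜ := by
  refine isPreconnected_of_forall_mem_connectedComponentIn fun c hc d hd => ?_
  rcases eq_or_ne c d with rfl | hcd
  · exact mem_connectedComponentIn hc
  refine mem_connectedComponentIn_of_hasLogOn_stereo h.isClosed hcd hc hd ?_
  have hcont : ContinuousOn (fun z => stereo d z - stereo d c) A :=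
    (continuousOn_stereo hd).sub continuousOn_const
  have hne : ∀ z ∈ A, stereo d z - stereo d c ≠ 0 := fun z hz h₀ => by
    have hzd : z ≠ d := ne_of_mem_of_not_mem hz hd
    rw [← stereo_symm_stereo hcd, ← sub_eq_zero.1 h₀, stereo_symm_stereo hzd] at hc
    exact hc hz
  obtain ⟨f, s, t, hst, hf, hinj, -, -, rfl⟩ := h
  exact hasLogOn_image_Icc hst hf hinj hcont hne

/-- If a neighbourhood `N` of `p` missed the component, then so would the complement of what
remains of `A ∪ P` after removing a subarc of `A` inside `N`; but that complement is connected by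
Janiszewski's theorem. -/
lemma mem_closure_connectedComponentIn_union (h : IsSimpleArc A a b) (hP : IsClosed P)
    (hPc : IsPreconnected Pᶜ) (hAP : A ∩ P ⊆ {a, b}) (hp : p ∈ A) (hpa : p ≠ a) (hpb : p ≠ b)
    (hc : c ∉ A ∪ P) : p ∈ closure (connectedComponentIn (A ∪ P)ᶜ c) := by
  by_contra hcon
  obtain ⟨_, _, A₁, A₂, h₁, h₂, hdisj, hsub, hpA, hN⟩ :=
    h.exists_subarcs_avoiding hp hpa hpb (isClosed_closure.isOpen_compl.mem_nhds hcon)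
  obtain ⟨hsub₁, hsub₂⟩ := union_subset_iff.1 hsub
  have hA₁P : A₁ ∩ P ⊆ {a} := fun z hz => (hAP ⟨hsub₁ hz.1, hz.2⟩).resolve_right
    (ne_of_mem_of_not_mem hz.1 (hdisj.notMem_of_mem_right h₂.right_mem))
  have hA₂P : A₂ ∩ P ⊆ {b} := fun z hz => (hAP ⟨hsub₂ hz.1, hz.2⟩).resolve_left
    (ne_of_mem_of_not_mem hz.1 (hdisj.notMem_of_mem_left h₁.left_mem))
  have hinter : A₁ ∩ (A₂ ∪ P) ⊆ {a} := by
    rwa [inter_union_distrib_left, hdisj.inter_eq, empty_union]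
  set L := A₁ ∪ (A₂ ∪ P) with hL
  have hLc : IsPreconnected Lᶜ := isPreconnected_compl_union h₁.isClosed (h₂.isClosed.union hP)
    (subsingleton_singleton.anti hinter).isPreconnected h₁.isPreconnected_compl
    (isPreconnected_compl_union h₂.isClosed hP (subsingleton_singleton.anti hA₂P).isPreconnected
      h₂.isPreconnected_compl hPc)
  have hLsub : L ⊆ A ∪ P := union_subset (hsub₁.trans subset_union_left)
    (union_subset_union_left P hsub₂)
  have hclosed : IsClosed (A ∪ P) := h.isClosed.union hP
  have hcomponent : closure (connectedComponentIn (A ∪ P)ᶜ c) ∩ Lᶜ ⊆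
      connectedComponentIn (A ∪ P)ᶜ c := by
    rintro z ⟨hz, hzL⟩
    rw [hL, ← union_assoc, compl_union] at hzL
    rcases closure_connectedComponentIn_compl_subset hclosed c hz with hz' | hzA | hzP
    · exact hz'
    · exact absurd hz (hN ⟨hzA, hzL.1⟩)
    · exact absurd hzP hzL.2
  have hpL : p ∈ Lᶜ := by
    rw [hL, ← union_assoc]
    exact not_or.2 ⟨hpA, fun hpP => (hAP ⟨hp, hpP⟩).elim hpa hpb⟩
  refine hcon (subset_closure (hLc.subset_of_closure_inter_subset
    hclosed.isOpen_compl.connectedComponentIn ⟨c, fun hcL => hc (hLsub hcL), ?_⟩ hcomponent hpL))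
  exact mem_connectedComponentIn hc

end IsSimpleArc

lemma eventually_mem_connectedComponentIn_of_subset_union {S R T : Set SpherePt} {o p : SpherePt}
    (hS : IsClosed S) (hR : IsClosed R) (hSR : IsPreconnected (S ∩ R)) (hT : T ⊆ S ∪ R)
    (hpR : p ∉ R) (hp : p ∈ closure (connectedComponentIn Tᶜ o))
    (hdisj : Disjoint R (connectedComponentIn Tᶜ o)) :
    ∀ᶠ z in 𝓝 p, z ∈ connectedComponentIn Sᶜ o → z ∈ connectedComponentIn Tᶜ o := by
  have hnhds : connectedComponentIn Rᶜ p ∈ 𝓝 p :=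
    hR.isOpen_compl.connectedComponentIn.mem_nhds (mem_connectedComponentIn hpR)
  obtain ⟨w, hwp, hwo⟩ := mem_closure_iff_nhds.1 hp _ hnhds
  have hoT : o ∈ Tᶜ := connectedComponentIn_nonempty_iff.1 ⟨w, hwo⟩
  have hoR : w ∈ connectedComponentIn Rᶜ o :=
    isPreconnected_connectedComponentIn.subset_connectedComponentIn (mem_connectedComponentIn hoT)
      hdisj.subset_compl_left hwo
  filter_upwards [hnhds] with z hzp hzS
  have hzR : z ∈ connectedComponentIn Rᶜ o := by
    rwa [connectedComponentIn_eq hoR, ← connectedComponentIn_eq hwp]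
  exact connectedComponentIn_mono o (compl_subset_compl.2 hT)
    (mem_connectedComponentIn_union_of_isPreconnected_inter hS hR hSR hzS hzR)

variable {X : Type*} [TopologicalSpace X] {a b p o : X}

lemma CrossesAt.mem_connectedComponentIn {σ γ P : Set X} (h : CrossesAt σ γ p)
    (hP : IsClosed P) (hp : p ∉ P) (hγ : γ \ (σ ∪ P) ⊆ connectedComponentIn (σ ∪ P)ᶜ a)
    (hb : p ∈ closure (connectedComponentIn (σ ∪ P)ᶜ b)) :
    b ∈ connectedComponentIn (σ ∪ P)ᶜ a := by
  obtain ⟨V, hV, hVP, C₁, C₂, hC, -, hC₁, hC₂, hγ₁, hγ₂⟩ :=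
    h.2.2 _ (hP.isOpen_compl.mem_nhds hp)
  have hVσ : V \ σ ⊆ (σ ∪ P)ᶜ := fun z hz => not_or.2 ⟨hz.2, hVP hz.1⟩
  have hside : ∀ S ⊆ V \ σ, IsPreconnected S → (γ ∩ S).Nonempty →
      S ⊆ connectedComponentIn (σ ∪ P)ᶜ a := by
    rintro S hS hSc ⟨z, hzγ, hzS⟩
    rw [connectedComponentIn_eq (hγ ⟨hzγ, hVσ (hS hzS)⟩)]
    exact hSc.subset_connectedComponentIn hzS (hS.trans hVσ)
  have hVa : V \ σ ⊆ connectedComponentIn (σ ∪ P)ᶜ a := by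
    rw [hC]
    exact union_subset (hside C₁ (hC ▸ subset_union_left) hC₁ hγ₁)
      (hside C₂ (hC ▸ subset_union_right) hC₂ hγ₂)
  obtain ⟨z, hzV, hzb⟩ := mem_closure_iff_nhds.1 hb V hV
  have hz : z ∈ (σ ∪ P)ᶜ := connectedComponentIn_subset _ _ hzb
  rw [connectedComponentIn_eq (hVa ⟨hzV, fun hzσ => hz (Or.inl hzσ)⟩),
    ← connectedComponentIn_eq hzb]
  exact _root_.mem_connectedComponentIn (connectedComponentIn_nonempty_iff.1 ⟨z, hzb⟩)

namespace IsClosedSide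

variable {T Δ : Set X}

lemma subset (h : IsClosedSide T Δ) : T ⊆ Δ := by
  obtain ⟨q, -, rfl⟩ := h
  exact subset_union_right

lemma disjoint_connectedComponentIn (h : IsClosedSide T Δ) (ho : o ∉ Δ) :
    Disjoint Δ (connectedComponentIn Tᶜ o) := by
  obtain ⟨q, -, rfl⟩ := h
  rw [disjoint_left]
  rintro z (hzq | hzT) hzo
  · refine ho (Or.inl ?_)
    rw [connectedComponentIn_eq hzq, ← connectedComponentIn_eq hzo]
    exact mem_connectedComponentIn (connectedComponentIn_nonempty_iff.1 ⟨z, hzo⟩)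
  · exact connectedComponentIn_subset _ _ hzo hzT

lemma notMem_of_not_subset {F : Set X} (h : IsClosedSide T Δ) (hF : IsPreconnected F)
    (hFT : Disjoint F T) (ho : o ∈ F) (hFΔ : ¬F ⊆ Δ) : o ∉ Δ := by
  obtain ⟨q, -, rfl⟩ := h
  rintro (hoq | hoT)
  · refine hFΔ (Subset.trans ?_ subset_union_left)
    rw [connectedComponentIn_eq hoq]
    exact hF.subset_connectedComponentIn ho hFT.subset_compl_right
  · exact hFT.notMem_of_mem_left ho hoT

end IsClosedSide

end Separation

/-! ### Good drawings of complete graphs -/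

section Drawings

namespace GoodDrawing

section Basic

variable {n : ℕ} {X : Type*} [TopologicalSpace X] (D : GoodDrawing n X) {u v w x y : Fin n}
  {z : X}

lemma isSimpleArc (h : u ≠ v) : IsSimpleArc (D.arc u v) (D.vtx u) (D.vtx v) := by
  obtain ⟨f, hf, hinj, h₀, h₁, hA⟩ := D.isArc u v h
  exact ⟨f, 0, 1, zero_le_one, hf, hinj, h₀, h₁, hA.symm⟩

lemma eq_vtx_of_mem_arc (huv : u ≠ v) (huw : u ≠ w) (hvw : v ≠ w) (hz : z ∈ D.arc u v)
    (hz' : z ∈ D.arc u w) : z = D.vtx u :=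
  (D.adj_arcs u v w huv huw hvw).subset ⟨hz, hz'⟩

lemma tri_comm (u v w : Fin n) : D.tri v u w = D.tri u v w := by
  rw [tri, tri, D.arc_symm v u, union_right_comm]

lemma tri_rotate (u v w : Fin n) : D.tri u w v = D.tri u v w := by
  rw [tri, tri, D.arc_symm w v, union_right_comm, union_assoc, union_comm, union_right_comm]

lemma tri_eq (u v w : Fin n) : D.tri u v w = D.arc u v ∪ (D.arc v w ∪ D.arc u w) :=
  union_assoc _ _ _

variable {D}

lemma isClosed_arc [T2Space X] (h : u ≠ v) : IsClosed (D.arc u v) :=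
  (D.isSimpleArc h).isClosed

lemma IsFace.isPreconnected {F : Set X} (hF : D.IsFace F) : IsPreconnected F := by
  obtain ⟨q, -, rfl⟩ := hF
  exact isPreconnected_connectedComponentIn

lemma IsFace.nonempty {F : Set X} (hF : D.IsFace F) : F.Nonempty := by
  obtain ⟨q, hq, rfl⟩ := hF
  exact ⟨q, mem_connectedComponentIn hq⟩

lemma IsFace.disjoint_arc {F : Set X} (hF : D.IsFace F) (huv : u ≠ v) :
    Disjoint F (D.arc u v) := by
  obtain ⟨q, -, rfl⟩ := hF
  refine disjoint_left.2 fun z hz hzA => connectedComponentIn_subset _ _ hz (Or.inr ?_)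
  simp only [mem_iUnion]
  exact ⟨u, mem_univ u, v, mem_univ v, huv, hzA⟩

lemma IsFace.disjoint_tri {F : Set X} (hF : D.IsFace F) (huv : u ≠ v) (huw : u ≠ w)
    (hvw : v ≠ w) : Disjoint F (D.tri u v w) :=
  ((hF.disjoint_arc huv).union_right (hF.disjoint_arc hvw)).union_right (hF.disjoint_arc huw)

lemma LocalSides.eventually_mem_union {p : X} {C : Fin 2 → Set X} {i j : Fin 2}
    {Δ₁ Δ₂ V₁ V₂ : Set X} (hC : D.LocalSides u v p C) (hij : i ≠ j) (hV₁ : V₁ ∈ 𝓝 p)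
    (hV₂ : V₂ ∈ 𝓝 p) (h₁ : C i ∩ V₁ ⊆ Δ₁) (h₂ : C j ∩ V₂ ⊆ Δ₂) :
    ∀ᶠ z in 𝓝 p, z ∉ D.arc u v → z ∈ Δ₁ ∪ Δ₂ := by
  obtain ⟨-, -, -, V, hV, hCV, -⟩ := hC
  have hCij : C i ∪ C j = V \ D.arc u v := by
    rw [← hCV]
    fin_cases i <;> fin_cases j <;> first | exact absurd rfl hij | rfl | exact union_comm _ _
  filter_upwards [hV, hV₁, hV₂] with z hzV hz₁ hz₂ hzA
  exact (hCij.superset ⟨hzV, hzA⟩).imp (fun hz => h₁ ⟨hz, hz₁⟩) (fun hz => h₂ ⟨hz, hz₂⟩)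

variable (D) in
/-- The arcs `D[ux]` and `D[vy]` on four distinct vertices meet at `q`, which splits `D[ux]` into
`B₁` and `B₂` and splits `D[vy]` into `E₁` and `E₂`; the subarcs `B₁` and `E₁` are the ones that
together with `D[uv]` form the small triangle at the crossing. -/
structure CrossingSplit (u v x y : Fin n) (q : X) (B₁ B₂ E₁ E₂ : Set X) : Prop where
  ne_uv : u ≠ v
  ne_ux : u ≠ x
  ne_uy : u ≠ y
  ne_vx : v ≠ x
  ne_vy : v ≠ y
  ne_xy : x ≠ y
  split_ux : IsArcSplit (D.arc u x) B₁ B₂ (D.vtx u) q (D.vtx x)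
  split_vy : IsArcSplit (D.arc v y) E₁ E₂ (D.vtx v) q (D.vtx y)

lemma Crosses.exists_crossingSplit (h : D.Crosses u x v y) (huv : u ≠ v) (hux : u ≠ x)
    (huy : u ≠ y) (hvx : v ≠ x) (hvy : v ≠ y) (hxy : x ≠ y) :
    ∃ q B₁ B₂ E₁ E₂, D.CrossingSplit u v x y q B₁ B₂ E₁ E₂ := by
  obtain ⟨q, ⟨hqB, hqE⟩, -⟩ := h
  obtain ⟨B₁, B₂, hB⟩ := (D.isSimpleArc hux).exists_isArcSplit hqB
  obtain ⟨E₁, E₂, hE⟩ := (D.isSimpleArc hvy).exists_isArcSplit hqE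
  exact ⟨q, B₁, B₂, E₁, E₂, huv, hux, huy, hvx, hvy, hxy, hB, hE⟩

namespace CrossingSplit

variable {q o : X} {B₁ B₂ E₁ E₂ : Set X}

lemma symm (h : D.CrossingSplit u v x y q B₁ B₂ E₁ E₂) :
    D.CrossingSplit v u y x q E₁ E₂ B₁ B₂ :=
  ⟨h.ne_uv.symm, h.ne_vy, h.ne_vx, h.ne_uy, h.ne_ux, h.ne_xy.symm, h.split_vy, h.split_ux⟩

lemma left_subset (h : D.CrossingSplit u v x y q B₁ B₂ E₁ E₂) : B₁ ⊆ D.arc u x :=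
  h.split_ux.union_eq ▸ subset_union_left

lemma right_subset (h : D.CrossingSplit u v x y q B₁ B₂ E₁ E₂) : B₂ ⊆ D.arc u x :=
  h.split_ux.union_eq ▸ subset_union_right

lemma mem_left (h : D.CrossingSplit u v x y q B₁ B₂ E₁ E₂) : q ∈ B₁ :=
  h.split_ux.left.right_mem

lemma mem_inter (h : D.CrossingSplit u v x y q B₁ B₂ E₁ E₂) : q ∈ D.arc u x ∩ D.arc v y :=
  ⟨h.left_subset h.mem_left, h.symm.left_subset h.symm.mem_left⟩

lemma arc_inter_arc (h : D.CrossingSplit u v x y q B₁ B₂ E₁ E₂) :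
    D.arc u x ∩ D.arc v y = {q} :=
  (D.indep_arcs u x v y h.ne_ux h.ne_vy h.ne_uv h.ne_uy h.ne_vx.symm
    h.ne_xy).1.eq_singleton_of_mem h.mem_inter

lemma ne_left (h : D.CrossingSplit u v x y q B₁ B₂ E₁ E₂) : q ≠ D.vtx u :=
  ne_of_mem_of_not_mem h.mem_inter.2 (D.vtx_not_mem v y u h.ne_vy h.ne_uv h.ne_uy)

lemma ne_right (h : D.CrossingSplit u v x y q B₁ B₂ E₁ E₂) : q ≠ D.vtx x :=
  ne_of_mem_of_not_mem h.mem_inter.2 (D.vtx_not_mem v y x h.ne_vy h.ne_vx.symm h.ne_xy)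

lemma arc_inter_tri_subset (h : D.CrossingSplit u v x y q B₁ B₂ E₁ E₂) :
    D.arc v y ∩ D.tri u v x ⊆ {D.vtx v, q} := by
  rintro z ⟨hz, (huv | hvx) | hux⟩
  · exact Or.inl (D.eq_vtx_of_mem_arc h.ne_uv.symm h.ne_vy h.ne_uy
      ((D.arc_symm u v).subset huv) hz)
  · exact Or.inl (D.eq_vtx_of_mem_arc h.ne_vx h.ne_vy h.ne_xy hvx hz)
  · exact Or.inr (h.arc_inter_arc.subset ⟨hux, hz⟩)

lemma crossing_mem_tri (h : D.CrossingSplit u v x y q B₁ B₂ E₁ E₂) : q ∈ D.tri u v x :=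
  Or.inr h.mem_inter.1

lemma vtx_mem_tri (h : D.CrossingSplit u v x y q B₁ B₂ E₁ E₂) : D.vtx v ∈ D.tri u v x :=
  Or.inl (Or.inl (D.isSimpleArc h.ne_uv).right_mem)

lemma arc_sdiff_tri_subset (h : D.CrossingSplit u v x y q B₁ B₂ E₁ E₂)
    (hz : z ∈ E₁) (hzo : z ∈ connectedComponentIn (D.tri u v x)ᶜ o)
    (hy : D.vtx y ∈ connectedComponentIn (D.tri u v x)ᶜ o) :
    D.arc v y \ D.tri u v x ⊆ connectedComponentIn (D.tri u v x)ᶜ o := by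
  have hE₁ : E₁ \ {D.vtx v, q} ⊆ connectedComponentIn (D.tri u v x)ᶜ o := by
    rw [connectedComponentIn_eq hzo]
    refine h.split_vy.left.isPreconnected_sdiff_pair.subset_connectedComponentIn
      ⟨hz, ?_⟩ fun w hw hwT => hw.2 (h.arc_inter_tri_subset ⟨h.symm.left_subset hw.1, hwT⟩)
    have hzT : z ∉ D.tri u v x := connectedComponentIn_subset _ _ hzo
    exact not_or.2 ⟨(ne_of_mem_of_not_mem h.vtx_mem_tri hzT).symm,
      (ne_of_mem_of_not_mem h.crossing_mem_tri hzT).symm⟩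
  have hE₂ : E₂ \ {q} ⊆ connectedComponentIn (D.tri u v x)ᶜ o := by
    rw [connectedComponentIn_eq hy]
    refine h.split_vy.right.isPreconnected_sdiff_left.subset_connectedComponentIn
      ⟨h.split_vy.right.right_mem, h.symm.ne_right.symm⟩ fun w hw hwT => ?_
    rcases h.arc_inter_tri_subset ⟨h.symm.right_subset hw.1, hwT⟩ with rfl | hwq
    · exact hw.2 (h.split_vy.inter_eq.subset ⟨h.split_vy.left.left_mem, hw.1⟩)
    · exact hw.2 hwq
  rintro w ⟨hw, hwT⟩
  have hwq : w ≠ q := (ne_of_mem_of_not_mem h.crossing_mem_tri hwT).symm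
  rcases h.split_vy.union_eq.superset hw with hw₁ | hw₂
  · exact hE₁ ⟨hw₁, not_or.2 ⟨(ne_of_mem_of_not_mem h.vtx_mem_tri hwT).symm, hwq⟩⟩
  · exact hE₂ ⟨hw₂, hwq⟩

end CrossingSplit

end Basic

variable {n : ℕ} {D : GoodDrawing n SpherePt} {u v w x y : Fin n} {p q o c : SpherePt}
  {B₁ B₂ E₁ E₂ Δ Δx Δy : Set SpherePt}

lemma mem_closure_connectedComponentIn_tri (huv : u ≠ v) (huw : u ≠ w) (hvw : v ≠ w)
    (hp : p ∈ D.arc u v \ {D.vtx u, D.vtx v}) (hc : c ∉ D.tri u v w) :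
    p ∈ closure (connectedComponentIn (D.tri u v w)ᶜ c) := by
  have hinter : D.arc v w ∩ D.arc u w = {D.vtx w} := by
    rw [D.arc_symm v w, D.arc_symm u w, D.adj_arcs w v u hvw.symm huw.symm huv.symm]
  rw [D.tri_eq] at hc ⊢
  refine (D.isSimpleArc huv).mem_closure_connectedComponentIn_union
    ((isClosed_arc hvw).union (isClosed_arc huw)) ?_ ?_ hp.1 (fun h => hp.2 (Or.inl h))
    (fun h => hp.2 (Or.inr h)) hc
  · exact isPreconnected_compl_union (isClosed_arc hvw) (isClosed_arc huw)
      (hinter ▸ isPreconnected_singleton) (D.isSimpleArc hvw).isPreconnected_compl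
      (D.isSimpleArc huw).isPreconnected_compl
  · rintro z ⟨hz, hzv | hzu⟩
    · exact Or.inr (D.eq_vtx_of_mem_arc huv.symm hvw huw ((D.arc_symm u v).subset hz) hzv)
    · exact Or.inl (D.eq_vtx_of_mem_arc huv huw hvw hz hzu)

namespace CrossingSplit

/-- Both local sides of `D[ux]` at `q` meet `D[vy]`, so otherwise the two regions at `q` would
coincide. -/
lemma not_arc_sdiff_tri_subset (h : D.CrossingSplit u v x y q B₁ B₂ E₁ E₂)
    (hΔ : IsClosedSide (D.tri u v x) Δ) (ho : o ∉ Δ) :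
    ¬D.arc v y \ D.tri u v x ⊆ connectedComponentIn (D.tri u v x)ᶜ o := by
  intro hsub
  obtain ⟨b, hb, rfl⟩ := hΔ
  have htri : D.tri u v x = D.arc u x ∪ (D.arc u v ∪ D.arc v x) := union_comm _ _
  have hqb : q ∈ closure (connectedComponentIn (D.tri u v x)ᶜ b) := by
    rw [← D.tri_rotate] at hb ⊢
    exact mem_closure_connectedComponentIn_tri h.ne_ux h.ne_uv h.ne_vx.symm
      ⟨h.mem_inter.1, not_or.2 ⟨h.ne_left, h.ne_right⟩⟩ hb
  have hqP : q ∉ D.arc u v ∪ D.arc v x := by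
    rintro (hq | hq)
    · exact h.ne_left (D.eq_vtx_of_mem_arc h.ne_uv h.ne_ux h.ne_vx hq h.mem_inter.1)
    · exact h.ne_right (D.eq_vtx_of_mem_arc h.ne_ux.symm h.ne_vx.symm h.ne_uv
        ((D.arc_symm u x).subset h.mem_inter.1) ((D.arc_symm v x).subset hq))
  have hcross : CrossesAt (D.arc u x) (D.arc v y) q :=
    ((D.indep_arcs u x v y h.ne_ux h.ne_vy h.ne_uv h.ne_uy h.ne_vx.symm h.ne_xy).2 q
      h.mem_inter).1
  have hbo : b ∈ connectedComponentIn (D.tri u v x)ᶜ o := by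
    rw [htri] at hsub hqb ⊢
    exact hcross.mem_connectedComponentIn ((isClosed_arc h.ne_uv).union (isClosed_arc h.ne_vx))
      hqP hsub hqb
  refine ho (Or.inl ?_)
  rw [← connectedComponentIn_eq hbo]
  exact mem_connectedComponentIn (connectedComponentIn_nonempty_iff.1 ⟨b, hbo⟩)

/-- If `E₁` entered the outer region of `uvx`, then `y` would be in it, since otherwise the closed
side containing `y` is convex and contains `D[vy]`; but then all of `D[vy]` off the triangle would
be in the outer region. -/
lemma disjoint_outer (h : D.CrossingSplit u v x y q B₁ B₂ E₁ E₂)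
    (hΔ : IsClosedSide (D.tri u v x) Δ) (ho : o ∉ Δ)
    (hconv : ∀ Δ', IsClosedSide (D.tri u v x) Δ' → o ∉ Δ' → D.ConvexDisc Δ') :
    Disjoint E₁ (connectedComponentIn (D.tri u v x)ᶜ o) := by
  refine disjoint_left.2 fun z hz hzo => ?_
  by_cases hy : D.vtx y ∈ connectedComponentIn (D.tri u v x)ᶜ o
  · exact h.not_arc_sdiff_tri_subset hΔ ho (h.arc_sdiff_tri_subset hz hzo hy)
  have hyT : D.vtx y ∉ D.tri u v x := fun hyT =>
    (h.arc_inter_tri_subset ⟨(D.isSimpleArc h.ne_vy).right_mem, hyT⟩).elim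
      (fun hyv => h.ne_vy (D.vtx_inj hyv).symm) h.symm.ne_right.symm
  set Δ' := connectedComponentIn (D.tri u v x)ᶜ (D.vtx y) ∪ D.tri u v x
  have hΔ' : IsClosedSide (D.tri u v x) Δ' := ⟨D.vtx y, hyT, rfl⟩
  have ho' : o ∉ Δ' := by
    rintro (hoy | hoT)
    · exact hy (connectedComponentIn_eq hoy ▸ mem_connectedComponentIn hyT)
    · exact ho (hΔ.subset hoT)
  have harc : D.arc v y ⊆ Δ' := hconv Δ' hΔ' ho' v y h.ne_vy (hΔ'.subset h.vtx_mem_tri)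
    (Or.inl (mem_connectedComponentIn hyT))
  exact disjoint_left.1 (hΔ'.disjoint_connectedComponentIn ho')
    (harc (h.symm.left_subset hz)) hzo

lemma small_inter_eq (h : D.CrossingSplit u v x y q B₁ B₂ E₁ E₂) :
    (D.arc u v ∪ (B₁ ∪ E₁)) ∩ (E₁ ∪ (D.arc v x ∪ B₂)) = E₁ := by
  refine Subset.antisymm ?_ fun z hz => ⟨Or.inr (Or.inr hz), Or.inl hz⟩
  have hvE : D.vtx v ∈ E₁ := h.split_vy.left.left_mem
  rintro z ⟨huv | hB₁ | hE₁, hE₁' | hvx | hB₂⟩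
  any_goals assumption
  · rwa [D.eq_vtx_of_mem_arc h.ne_uv.symm h.ne_vx h.ne_ux ((D.arc_symm u v).subset huv) hvx]
  · have hzu := D.eq_vtx_of_mem_arc h.ne_uv h.ne_ux h.ne_vx huv (h.right_subset hB₂)
    exact absurd (h.split_ux.inter_eq.subset ⟨h.split_ux.left.left_mem, hzu ▸ hB₂⟩).symm
      h.ne_left
  · have hzx := D.eq_vtx_of_mem_arc h.ne_ux.symm h.ne_vx.symm h.ne_uv
      ((D.arc_symm u x).subset (h.left_subset hB₁)) ((D.arc_symm v x).subset hvx)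
    exact absurd (h.split_ux.inter_eq.subset ⟨hzx ▸ hB₁, h.split_ux.right.right_mem⟩).symm
      h.ne_right
  · rw [mem_singleton_iff.1 (h.split_ux.inter_eq.subset ⟨hB₁, hB₂⟩)]
    exact h.symm.mem_left

lemma eventually_mem_outer (h : D.CrossingSplit u v x y q B₁ B₂ E₁ E₂)
    (hp : p ∈ D.arc u v \ {D.vtx u, D.vtx v}) (hΔ : IsClosedSide (D.tri u v x) Δ) (ho : o ∉ Δ)
    (hconv : ∀ Δ', IsClosedSide (D.tri u v x) Δ' → o ∉ Δ' → D.ConvexDisc Δ') :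
    ∀ᶠ z in 𝓝 p, z ∈ connectedComponentIn (D.arc u v ∪ (B₁ ∪ E₁))ᶜ o →
      z ∈ connectedComponentIn (D.tri u v x)ᶜ o := by
  have hE₁ : IsSimpleArc E₁ (D.vtx v) q := h.split_vy.left
  refine eventually_mem_connectedComponentIn_of_subset_union (R := E₁ ∪ (D.arc v x ∪ B₂))
    ((isClosed_arc h.ne_uv).union (h.split_ux.left.isClosed.union hE₁.isClosed))
    (hE₁.isClosed.union ((isClosed_arc h.ne_vx).union h.split_ux.right.isClosed))
    (h.small_inter_eq.symm ▸ hE₁.isPreconnected) ?_ ?_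
    (mem_closure_connectedComponentIn_tri h.ne_uv h.ne_ux h.ne_vx hp fun hoT =>
      ho (hΔ.subset hoT)) ?_
  · rintro z ((huv | hvx) | hux)
    · exact Or.inl (Or.inl huv)
    · exact Or.inr (Or.inr (Or.inl hvx))
    · exact (h.split_ux.union_eq.superset hux).imp (fun hB₁ => Or.inr (Or.inl hB₁))
        fun hB₂ => Or.inr (Or.inr hB₂)
  · have hp' : p ∈ D.arc v u := (D.arc_symm u v).subset hp.1
    rintro (hE | hvx | hB₂)
    · exact hp.2 (Or.inr (D.eq_vtx_of_mem_arc h.ne_uv.symm h.ne_vy h.ne_uy hp'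
        (h.symm.left_subset hE)))
    · exact hp.2 (Or.inr (D.eq_vtx_of_mem_arc h.ne_uv.symm h.ne_vx h.ne_ux hp' hvx))
    · exact hp.2 (Or.inl (D.eq_vtx_of_mem_arc h.ne_uv h.ne_ux h.ne_vx hp.1
        (h.right_subset hB₂)))
  · have htri : Disjoint (D.tri u v x) (connectedComponentIn (D.tri u v x)ᶜ o) :=
      disjoint_left.2 fun z hz hzo => connectedComponentIn_subset _ _ hzo hz
    refine (h.disjoint_outer hΔ ho hconv).union_left (htri.mono_left (union_subset ?_ ?_))
    · exact fun z hz => Or.inl (Or.inr hz)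
    · exact fun z hz => Or.inr (h.right_subset hz)

lemma mem_closure_small_outer (h : D.CrossingSplit u v x y q B₁ B₂ E₁ E₂)
    (hp : p ∈ D.arc u v \ {D.vtx u, D.vtx v}) (ho : o ∉ D.arc u v ∪ (B₁ ∪ E₁)) :
    p ∈ closure (connectedComponentIn (D.arc u v ∪ (B₁ ∪ E₁))ᶜ o) := by
  have hB₁ : IsSimpleArc B₁ (D.vtx u) q := h.split_ux.left
  have hE₁ : IsSimpleArc E₁ (D.vtx v) q := h.split_vy.left
  have hinter : B₁ ∩ E₁ ⊆ {q} := h.arc_inter_arc ▸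
    inter_subset_inter h.left_subset h.symm.left_subset
  refine (D.isSimpleArc h.ne_uv).mem_closure_connectedComponentIn_union
    (hB₁.isClosed.union hE₁.isClosed) ?_ ?_ hp.1 (fun hpu => hp.2 (Or.inl hpu))
    (fun hpv => hp.2 (Or.inr hpv)) ho
  · exact isPreconnected_compl_union hB₁.isClosed hE₁.isClosed
      (subsingleton_singleton.anti hinter).isPreconnected hB₁.isPreconnected_compl
      hE₁.isPreconnected_compl
  · rintro z ⟨hz, hzB | hzE⟩
    · exact Or.inl (D.eq_vtx_of_mem_arc h.ne_uv h.ne_ux h.ne_vx hz (h.left_subset hzB))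
    · exact Or.inr (D.eq_vtx_of_mem_arc h.ne_uv.symm h.ne_vy h.ne_uy
        ((D.arc_symm u v).subset hz) (h.symm.left_subset hzE))

lemma not_eventually_mem_union (h : D.CrossingSplit u v x y q B₁ B₂ E₁ E₂)
    (hp : p ∈ D.arc u v \ {D.vtx u, D.vtx v})
    (hΔx : IsClosedSide (D.tri u v x) Δx) (hΔy : IsClosedSide (D.tri u v y) Δy)
    (hox : o ∉ Δx) (hoy : o ∉ Δy)
    (hconvx : ∀ Δ, IsClosedSide (D.tri u v x) Δ → o ∉ Δ → D.ConvexDisc Δ)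
    (hconvy : ∀ Δ, IsClosedSide (D.tri u v y) Δ → o ∉ Δ → D.ConvexDisc Δ) :
    ¬∀ᶠ z in 𝓝 p, z ∉ D.arc u v → z ∈ Δx ∪ Δy := by
  intro hsides
  have hx := h.eventually_mem_outer hp hΔx hox hconvx
  have hy : ∀ᶠ z in 𝓝 p, z ∈ connectedComponentIn (D.arc u v ∪ (B₁ ∪ E₁))ᶜ o →
      z ∈ connectedComponentIn (D.tri u v y)ᶜ o := by
    rw [← D.tri_comm u v y] at hΔy hconvy ⊢
    rw [D.arc_symm u v, pair_comm] at hp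
    rw [D.arc_symm u v, union_comm B₁ E₁]
    exact h.symm.eventually_mem_outer hp hΔy hoy hconvy
  have ho : o ∉ D.arc u v ∪ (B₁ ∪ E₁) := by
    rintro (huv | hB₁ | hE₁)
    · exact hox (hΔx.subset (Or.inl (Or.inl huv)))
    · exact hox (hΔx.subset (Or.inr (h.left_subset hB₁)))
    · exact hoy (hΔy.subset (Or.inl (Or.inr (h.symm.left_subset hE₁))))
  obtain ⟨z, ⟨hzx, hzy, hz⟩, hzo⟩ :=
    mem_closure_iff_nhds.1 (h.mem_closure_small_outer hp ho) _ (hx.and (hy.and hsides))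
  rcases hz fun huv => connectedComponentIn_subset _ _ hzo (Or.inl huv) with hzΔ | hzΔ
  · exact disjoint_left.1 (hΔx.disjoint_connectedComponentIn hox) hzΔ (hzx hzo)
  · exact disjoint_left.1 (hΔy.disjoint_connectedComponentIn hoy) hzΔ (hzy hzo)

end CrossingSplit

lemma not_crosses_of_differentSides {F : Set SpherePt} (hF : D.IsFace F) (huv : u ≠ v)
    (hxy : x ≠ y)
    (hconvx : ∀ Δ, IsClosedSide (D.tri u v x) Δ → ¬F ⊆ Δ → D.ConvexDisc Δ)
    (hconvy : ∀ Δ, IsClosedSide (D.tri u v y) Δ → ¬F ⊆ Δ → D.ConvexDisc Δ)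
    {C : Fin 2 → Set SpherePt} (hC : D.LocalSides u v p C) {i j : Fin 2} (hij : i ≠ j)
    (hx : D.OnSide F u v p C i x) (hy : D.OnSide F u v p C j y) : ¬D.Crosses u x v y := by
  intro hcross
  obtain ⟨hxu, hxv, Δx, hΔx, hFx, Vx, hVx, hCx⟩ := hx
  obtain ⟨hyu, hyv, Δy, hΔy, hFy, Vy, hVy, hCy⟩ := hy
  obtain ⟨o, ho⟩ := hF.nonempty
  obtain ⟨q, B₁, B₂, E₁, E₂, h⟩ :=
    hcross.exists_crossingSplit huv hxu.symm hyu.symm hxv.symm hyv.symm hxy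
  refine h.not_eventually_mem_union ⟨hC.1, not_or.2 ⟨hC.2.1, hC.2.2.1⟩⟩ hΔx hΔy ?_ ?_
    (fun Δ hΔ hoΔ => hconvx Δ hΔ fun hFΔ => hoΔ (hFΔ ho))
    (fun Δ hΔ hoΔ => hconvy Δ hΔ fun hFΔ => hoΔ (hFΔ ho))
    (hC.eventually_mem_union hij hVx hVy hCx hCy)
  · exact hΔx.notMem_of_not_subset hF.isPreconnected
      (hF.disjoint_tri huv hxu.symm hxv.symm) ho hFx
  · exact hΔy.notMem_of_not_subset hF.isPreconnected
      (hF.disjoint_tri huv hyu.symm hyv.symm) ho hFy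

end GoodDrawing

end Drawings

theorem no_crossing_of_differentSides_general {n : ℕ} {D : GoodDrawing n SpherePt}
    {F : Set SpherePt} (hF : D.IsFace F) {u v x y : Fin n} (huv : u ≠ v) (hxy : x ≠ y)
    (hconvx : ∀ Δ, IsClosedSide (D.tri u v x) Δ → ¬F ⊆ Δ → D.ConvexDisc Δ)
    (hconvy : ∀ Δ, IsClosedSide (D.tri u v y) Δ → ¬F ⊆ Δ → D.ConvexDisc Δ)
    {p : SpherePt} {C : Fin 2 → Set SpherePt} (hC : D.LocalSides u v p C)
    {i j : Fin 2} (hij : i ≠ j)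
    (hx : D.OnSide F u v p C i x) (hy : D.OnSide F u v p C j y) :
    ¬D.Crosses u x v y ∧ ¬D.Crosses u y v x :=
  ⟨GoodDrawing.not_crosses_of_differentSides hF huv hxy hconvx hconvy hC hij hx hy,
    GoodDrawing.not_crosses_of_differentSides hF huv hxy.symm hconvy hconvx hC hij.symm hy hx⟩

/-- If `x` and `y` are on different sides of `uv`, then the drawing of the `K_4` on
`u, v, x, y` minus the edge `xy` has no crossing: the arcs `D[ux]`, `D[vy]` do not
cross and the arcs `D[uy]`, `D[vx]` do not cross. -/
theorem no_crossing_of_differentSides (n : ℕ) (D : GoodDrawing n SpherePt)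
    (F : Set SpherePt) (hFC : D.FaceConvex F) (u v x y : Fin n)
    (huv : u ≠ v) (hux : u ≠ x) (huy : u ≠ y) (hvx : v ≠ x) (hvy : v ≠ y) (hxy : x ≠ y)
    (p : SpherePt) (C : Fin 2 → Set SpherePt) (hC : D.LocalSides u v p C)
    (i j : Fin 2) (hij : i ≠ j)
    (hx : D.OnSide F u v p C i x) (hy : D.OnSide F u v p C j y) :
    ¬D.Crosses u x v y ∧ ¬D.Crosses u y v x :=
  no_crossing_of_differentSides_general hFC.1 huv hxy (hFC.2 u v x huv hux hvx)
    (hFC.2 u v y huv huy hvy) hC hij hx hy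

end
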